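/- In the calculus λ_S, a doubled reset is applicatively bisimilar to a single reset: for every closed term t, ⟨⟨t⟩⟩ ≈_app ⟨t⟩. -/

import Mathlib

namespace LambdaS

/-- Terms of the calculus λ_S: variables, λ-abstractions, applications,
the shift operator `S k.t`, and the reset delimiter `⟨t⟩`. -/
inductive Tm : Type
  | var : ℕ → Tm
  | lam : ℕ → Tm → Tm
  | app : Tm → Tm → Tm
  | shift : ℕ → Tm → Tm
  | reset : Tm → Tm
  deriving DecidableEq

/-- A variable fresh for a finite set of variables. -/
def fresh (s : Finset ℕ) : ℕ := if h : s.Nonempty then s.max' h + 1 else 0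

namespace Tm

/-- Free variables. -/
def fv : Tm → Finset ℕ
  | var x => {x}
  | lam x t => fv t \ {x}
  | app t u => fv t ∪ fv u
  | shift k t => fv t \ {k}
  | reset t => fv t

def size : Tm → ℕ
  | var _ => 1
  | lam _ t => size t + 1
  | app t u => size t + size u + 1
  | shift _ t => size t + 1
  | reset t => size t + 1

/-- Renaming of free occurrences of a variable (used for α-renaming with a
fresh target variable). -/
def rename : Tm → ℕ → ℕ → Tm
  | var w, y, z => if w = y then var z else var w
  | lam w t, y, z => if w = y then lam w t else lam w (rename t y z)
  | app t u, y, z => app (rename t y z) (rename u y z)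
  | shift w t, y, z => if w = y then shift w t else shift w (rename t y z)
  | reset t, y, z => reset (rename t y z)

theorem size_rename (t : Tm) (y z : ℕ) : size (rename t y z) = size t := by
  induction t generalizing y z with
  | var w => simp only [rename]; split <;> rfl
  | lam w t ih => simp only [rename]; split <;> simp [size, ih]
  | app t u iht ihu => simp [rename, size, iht, ihu]
  | shift w t ih => simp only [rename]; split <;> simp [size, ih]
  | reset t ih => simp [rename, size, ih]

/-- Capture-avoiding substitution `t{v/x}` of `v` for the free occurrences of
`x` in `t`; bound variables are α-renamed when needed. -/
def subst : Tm → ℕ → Tm → Tm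
  | var w, x, v => if w = x then v else var w
  | lam y t, x, v =>
      if y = x then lam y t
      else if y ∈ fv v then
        lam (fresh (fv v ∪ fv t ∪ {x}))
          (subst (rename t y (fresh (fv v ∪ fv t ∪ {x}))) x v)
      else lam y (subst t x v)
  | app t u, x, v => app (subst t x v) (subst u x v)
  | shift y t, x, v =>
      if y = x then shift y t
      else if y ∈ fv v then
        shift (fresh (fv v ∪ fv t ∪ {x}))
          (subst (rename t y (fresh (fv v ∪ fv t ∪ {x}))) x v)
      else shift y (subst t x v)
  | reset t, x, v => reset (subst t x v)
termination_by t _ _ => size t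
decreasing_by all_goals simp [size_rename, size] <;> omega

end Tm

/-- Values: variables and λ-abstractions. -/
inductive IsValue : Tm → Prop
  | var (x : ℕ) : IsValue (Tm.var x)
  | lam (x : ℕ) (t : Tm) : IsValue (Tm.lam x t)

/-- A term is closed if it has no free variables. -/
def Closed (t : Tm) : Prop := t.fv = ∅

/-- Pure evaluation contexts E ::= □ | v E | E t. -/
inductive ECtx : Type
  | hole : ECtx
  | appR : (v : Tm) → IsValue v → ECtx → ECtx
  | appL : ECtx → Tm → ECtx

def ECtx.plug : ECtx → Tm → Tm
  | .hole, t => t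
  | .appR v _ E, t => Tm.app v (E.plug t)
  | .appL E u, t => Tm.app (E.plug t) u

def ECtx.fv : ECtx → Finset ℕ
  | .hole => ∅
  | .appR v _ E => v.fv ∪ E.fv
  | .appL E u => E.fv ∪ u.fv

/-- Composition of pure contexts: `(E.comp E').plug t = E.plug (E'.plug t)`. -/
def ECtx.comp : ECtx → ECtx → ECtx
  | .hole, E' => E'
  | .appR v hv E, E' => .appR v hv (E.comp E')
  | .appL E u, E' => .appL (E.comp E') u

/-- Evaluation contexts F ::= □ | v F | F t | ⟨F⟩. -/
inductive FCtx : Type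
  | hole : FCtx
  | appR : (v : Tm) → IsValue v → FCtx → FCtx
  | appL : FCtx → Tm → FCtx
  | reset : FCtx → FCtx

def FCtx.plug : FCtx → Tm → Tm
  | .hole, t => t
  | .appR v _ F, t => Tm.app v (F.plug t)
  | .appL F u, t => Tm.app (F.plug t) u
  | .reset F, t => Tm.reset (F.plug t)

def FCtx.fv : FCtx → Finset ℕ
  | .hole => ∅
  | .appR v _ F => v.fv ∪ F.fv
  | .appL F u => F.fv ∪ u.fv
  | .reset F => F.fv

/-- The function `λx.⟨E[x]⟩` representing the captured delimited context `E`,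
where `x` is chosen fresh (in particular `x ∉ fv E`). -/
def contFun (E : ECtx) : Tm :=
  Tm.lam (fresh E.fv) (Tm.reset (E.plug (Tm.var (fresh E.fv))))

/-- Call-by-value reduction →_v of λ_S. -/
inductive Red : Tm → Tm → Prop
  | beta (F : FCtx) (x : ℕ) (t v : Tm) :
      IsValue v →
      Red (F.plug (Tm.app (Tm.lam x t) v)) (F.plug (t.subst x v))
  | capture (F : FCtx) (E : ECtx) (k : ℕ) (t : Tm) :
      Red (F.plug (Tm.reset (E.plug (Tm.shift k t))))
          (F.plug (Tm.reset (t.subst k (contFun E))))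
  | resetVal (F : FCtx) (v : Tm) :
      IsValue v →
      Red (F.plug (Tm.reset v)) (F.plug v)

/-- A stuck term: not a value and unable to reduce. -/
def Stuck (t : Tm) : Prop := ¬ IsValue t ∧ ∀ t', ¬ Red t t'

/-- Normal forms: values and stuck terms. -/
def NormalForm (t : Tm) : Prop := IsValue t ∨ Stuck t

/-- A control-stuck term has the form E[S k.t]. -/
def ControlStuck (t : Tm) : Prop :=
  ∃ (E : ECtx) (k : ℕ) (s : Tm), t = E.plug (Tm.shift k s)

/-- Evaluation: `t ⇓ t'` iff `t →_v* t'` and `t'` is a normal form. -/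
def Evals (t t' : Tm) : Prop := Relation.ReflTransGen Red t t' ∧ NormalForm t'

/-- `t` evaluates to some value. -/
def EvalsToValue (t : Tm) : Prop := ∃ v, Relation.ReflTransGen Red t v ∧ IsValue v

/-- `t` evaluates to some control-stuck term. -/
def EvalsToStuck (t : Tm) : Prop :=
  ∃ s, Relation.ReflTransGen Red t s ∧ ControlStuck s

/-- General contexts C ::= □ | λx.C | t C | C t | S k.C | ⟨C⟩. -/
inductive Ctx : Type
  | hole : Ctx
  | lam : ℕ → Ctx → Ctx
  | appL : Ctx → Tm → Ctx
  | appR : Tm → Ctx → Ctx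
  | shift : ℕ → Ctx → Ctx
  | reset : Ctx → Ctx

def Ctx.plug : Ctx → Tm → Tm
  | .hole, t => t
  | .lam x C, t => Tm.lam x (C.plug t)
  | .appL C u, t => Tm.app (C.plug t) u
  | .appR u C, t => Tm.app u (C.plug t)
  | .shift k C, t => Tm.shift k (C.plug t)
  | .reset C, t => Tm.reset (C.plug t)

def Ctx.fv : Ctx → Finset ℕ
  | .hole => ∅
  | .lam x C => C.fv \ {x}
  | .appL C u => C.fv ∪ u.fv
  | .appR u C => u.fv ∪ C.fv
  | .shift k C => C.fv \ {k}
  | .reset C => C.fv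

/-- Contextual equivalence ≈ for the relaxed semantics (on closed terms):
tests evaluation to values and evaluation to control-stuck terms in every
closed context. -/
def CtxEquiv (t0 t1 : Tm) : Prop :=
  ∀ C : Ctx, C.fv = ∅ →
    (EvalsToValue (C.plug t0) ↔ EvalsToValue (C.plug t1)) ∧
    (EvalsToStuck (C.plug t0) ↔ EvalsToStuck (C.plug t1))

/-- Contextual equivalence ≈_p for the original semantics: tests evaluation to
values of ⟨C[·]⟩ in every closed context C. -/
def CtxEquivP (t0 t1 : Tm) : Prop :=
  ∀ C : Ctx, C.fv = ∅ →
    (EvalsToValue (Tm.reset (C.plug t0)) ↔ EvalsToValue (Tm.reset (C.plug t1)))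

/-- Contextual equivalence ≈_E testing only with closed evaluation contexts. -/
def ECtxEquiv (t0 t1 : Tm) : Prop :=
  ∀ F : FCtx, F.fv = ∅ →
    (EvalsToValue (F.plug t0) ↔ EvalsToValue (F.plug t1)) ∧
    (EvalsToStuck (F.plug t0) ↔ EvalsToStuck (F.plug t1))

/-- Applicative simulation. -/
def IsAppSim (R : Tm → Tm → Prop) : Prop :=
  ∀ t0 t1, R t0 t1 →
    (∀ t0', Red t0 t0' →
      ∃ t1', Relation.ReflTransGen Red t1 t1' ∧ R t0' t1') ∧
    (∀ x t0', t0 = Tm.lam x t0' →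
      ∃ t1', Relation.ReflTransGen Red t1 (Tm.lam x t1') ∧
        ∀ v, IsValue v → Closed v → R (t0'.subst x v) (t1'.subst x v)) ∧
    (∀ (E0 : ECtx) (k : ℕ) (t0' : Tm), t0 = E0.plug (Tm.shift k t0') →
      ∃ (E1 : ECtx) (t1' : Tm),
        Relation.ReflTransGen Red t1 (E1.plug (Tm.shift k t1')) ∧
        ∀ E : ECtx, E.fv = ∅ →
          R (Tm.reset (t0'.subst k (contFun (E.comp E0))))
            (Tm.reset (t1'.subst k (contFun (E.comp E1)))))

/-- Applicative bisimulation. -/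
def IsAppBisim (R : Tm → Tm → Prop) : Prop :=
  IsAppSim R ∧ IsAppSim (fun a b => R b a)

/-- Applicative bisimilarity ≈_app: the largest applicative bisimulation. -/
def AppBisim (t0 t1 : Tm) : Prop := ∃ R, IsAppBisim R ∧ R t0 t1

/-- Simultaneous substitution (used only with closing substitutions mapping
variables to closed values, so no capture can occur). -/
def Tm.msubst : Tm → (ℕ → Tm) → Tm
  | .var x, σ => σ x
  | .lam x t, σ => Tm.lam x (t.msubst (Function.update σ x (Tm.var x)))
  | .app t u, σ => Tm.app (t.msubst σ) (u.msubst σ)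
  | .shift k t, σ => Tm.shift k (t.msubst (Function.update σ k (Tm.var k)))
  | .reset t, σ => Tm.reset (t.msubst σ)

/-- Open extension of a relation on closed terms: relate `t0σ` and `t1σ` for
every substitution σ mapping variables to closed values. -/
def OpenExt (R : Tm → Tm → Prop) (t0 t1 : Tm) : Prop :=
  ∀ σ : ℕ → Tm, (∀ x, IsValue (σ x) ∧ Closed (σ x)) →
    R (t0.msubst σ) (t1.msubst σ)

/-- ω := λx.x x. -/
def omegaTm : Tm := Tm.lam 0 (Tm.app (Tm.var 0) (Tm.var 0))

/-- Ω := ω ω, a diverging term. -/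
def OmegaTm : Tm := Tm.app omegaTm omegaTm


theorem Red.reset' {t u : Tm} (h : Red t u) : Red (Tm.reset t) (Tm.reset u) := by
  cases h with
  | beta F x t v hv => exact Red.beta (.reset F) x t v hv
  | capture F E k t => exact Red.capture (.reset F) E k t
  | resetVal F v hv => exact Red.resetVal (.reset F) v hv

theorem reset_ne_stuck (t : Tm) (E : ECtx) (k : ℕ) (s : Tm) :
    Tm.reset t ≠ E.plug (Tm.shift k s) := by
  cases E <;> simp [ECtx.plug]

/-- Inversion of a reduction step of a delimited term. -/
theorem red_reset_inv {t u : Tm} (h : Red (Tm.reset t) u) :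
    (∃ t', u = Tm.reset t' ∧ Red t t') ∨
    (∃ E k s, t = ECtx.plug E (Tm.shift k s) ∧ u = Tm.reset (s.subst k (contFun E))) ∨
    (IsValue t ∧ u = t) := by
  generalize hr : Tm.reset t = r at h
  cases h with
  | beta F x s v hv =>
    cases F with
    | hole => simp [FCtx.plug] at hr
    | appR => simp [FCtx.plug] at hr
    | appL => simp [FCtx.plug] at hr
    | reset F =>
      simp only [FCtx.plug, Tm.reset.injEq] at hr
      subst hr
      exact Or.inl ⟨_, rfl, Red.beta F x s v hv⟩
  | capture F E k s =>
    cases F with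
    | hole =>
      simp only [FCtx.plug, Tm.reset.injEq] at hr
      exact Or.inr (Or.inl ⟨E, k, s, hr, rfl⟩)
    | appR => simp [FCtx.plug] at hr
    | appL => simp [FCtx.plug] at hr
    | reset F =>
      simp only [FCtx.plug, Tm.reset.injEq] at hr
      subst hr
      exact Or.inl ⟨_, rfl, Red.capture F E k s⟩
  | resetVal F v hv =>
    cases F with
    | hole =>
      simp only [FCtx.plug, Tm.reset.injEq] at hr
      subst hr
      exact Or.inr (Or.inr ⟨hv, rfl⟩)
    | appR => simp [FCtx.plug] at hr
    | appL => simp [FCtx.plug] at hr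
    | reset F =>
      simp only [FCtx.plug, Tm.reset.injEq] at hr
      subst hr
      exact Or.inl ⟨_, rfl, Red.resetVal F v hv⟩

/-- The candidate bisimulation: identity together with all pairs (⟨⟨t⟩⟩, ⟨t⟩). -/
def DR (a b : Tm) : Prop := a = b ∨ ∃ t, a = Tm.reset (Tm.reset t) ∧ b = Tm.reset t

theorem DR_sim : IsAppSim DR := by
  rintro a b (rfl | ⟨t, rfl, rfl⟩)
  · refine ⟨fun a' h => ⟨a', .single h, Or.inl rfl⟩, ?_, ?_⟩
    · rintro x s rfl
      exact ⟨s, .refl, fun _ _ _ => Or.inl rfl⟩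
    · rintro E k s rfl
      exact ⟨E, s, .refl, fun _ _ => Or.inl rfl⟩
  · refine ⟨?_, fun x s h => by simp at h, fun E k s h => (reset_ne_stuck _ _ _ _ h).elim⟩
    intro u h
    rcases red_reset_inv h with ⟨w, rfl, hw⟩ | ⟨E, k, s, he, -⟩ | ⟨hv, -⟩
    · rcases red_reset_inv hw with ⟨w', rfl, -⟩ | ⟨E, k, s, -, rfl⟩ | ⟨-, rfl⟩
      · exact ⟨_, .single hw, Or.inr ⟨_, rfl, rfl⟩⟩
      · exact ⟨_, .single hw, Or.inr ⟨_, rfl, rfl⟩⟩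
      · exact ⟨_, .refl, Or.inl rfl⟩
    · exact (reset_ne_stuck _ _ _ _ he).elim
    · cases hv

theorem DR_sim_inv : IsAppSim (fun a b => DR b a) := by
  rintro a b (rfl | ⟨t, rfl, rfl⟩)
  · refine ⟨fun a' h => ⟨a', .single h, Or.inl rfl⟩, ?_, ?_⟩
    · rintro x s rfl
      exact ⟨s, .refl, fun _ _ _ => Or.inl rfl⟩
    · rintro E k s rfl
      exact ⟨E, s, .refl, fun _ _ => Or.inl rfl⟩
  · refine ⟨?_, fun x s h => by simp at h, fun E k s h => (reset_ne_stuck _ _ _ _ h).elim⟩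
    intro u h
    rcases red_reset_inv h with ⟨w, rfl, -⟩ | ⟨E, k, s, -, rfl⟩ | ⟨hv, rfl⟩
    · exact ⟨_, .single h.reset', Or.inr ⟨_, rfl, rfl⟩⟩
    · exact ⟨_, .single h.reset', Or.inr ⟨_, rfl, rfl⟩⟩
    · exact ⟨_, (Relation.ReflTransGen.single h.reset').tail h, Or.inl rfl⟩

/-- A doubled reset is applicatively bisimilar to a single
reset, for every closed term. -/
theorem double_reset_appBisim (t : Tm) (h : Closed t) :
    AppBisim (Tm.reset (Tm.reset t)) (Tm.reset t) := by
  exact ⟨DR, ⟨DR_sim, DR_sim_inv⟩, Or.inr ⟨t, rfl, rfl⟩⟩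

end LambdaS
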